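/- Let F be a free group, let H and K be finitely generated subgroups of F, and let S ⊆ F be a set of double coset representatives for (H,K). Let L = ⟨H, K, S⟩ and suppose that neither H nor K has finite index in L and that the rank n of the (finitely generated, free) group L satisfies n > 2. Then there exists a surjective group homomorphism ε₁ : L → F_{n-1} onto a free group F_{n-1} of rank n−1 such that: (a) the restriction of ε₁ to H and to K is injective; (b) ε₁(S) is a set of double coset representatives for (ε₁(H), ε₁(K)) in F_{n-1}, with ε₁ injective on S; (c) for every s ∈ S one has ε₁(H ∩ sKs⁻¹) = ε₁(H) ∩ ε₁(s)ε₁(K)ε₁(s)⁻¹; and (d) neither ε₁(H) nor ε₁(K) has finite index in F_{n-1} = ⟨ε₁(H), ε₁(K), ε₁(S)⟩. -/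

import Mathlib

/-!
The homomorphism `ε₁` identifies one letter of a suitable basis of `L` with a word in the others:
with basis `t, x, y, …` it sends `t` to `y ^ N * x ^ N * y ^ N` for large `N`. Finite generation
of `H` and `K` and their infinite index are used to choose the basis; everything else follows from
a *set-theoretic section* `σ` of `ε₁` which is almost a homomorphism.

**Choosing the basis** (`exists_good_basis`). For a finitely generated `H` the reduced words of the
elements of `H` only run through a finite set `V` of cosets (`exists_core`). For a positive word
`w`, let `stay V w` be the set of `v ∈ V` such that reading `w` from `v` never leaves `V`. Among all
bases consisting of positive words take one minimizing `∑ i, |stay V (y i)|`. Comparing with the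
transvections `y j ↦ y j * y i` and `y i ↦ y j * y i` gives `y i • stay V (y i) = stay V (y j)` for
all `i ≠ j`; as there are at least three indices, all these sets coincide and are invariant under
the whole group, so they are empty because the index is infinite (`exists_basis_stay_empty`). Then
no power of a basis element is conjugate into `H` (`stay_nonempty`), hence by pigeonhole the
exponents of the basis letters in reduced words of elements of `H` are bounded
(`exists_run_bound`). Using the disjoint union of the two coset spaces, one basis works for both
`H` and `K`.

**The section** (`sig`). Write `P = y⁻ᴺ t y⁻ᴺ x⁻ᴺ`, an element of the kernel. The section `σ` keeps
all letters, except that each maximal power `x ^ i` is lifted to `P * x ^ i` if `N ≤ i`, to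
`x ^ i * P⁻¹` if `i ≤ -N`, and to `x ^ i` otherwise. For fixed `u` the defects
`σ (u * r) * (σ r)⁻¹` and `(σ r)⁻¹ * σ (r * u)` take finitely many values (`quasiSection_sig`), and
`σ (ε₁ g) = g` whenever the exponents of `x` and `y` in the reduced word of `g` are smaller than `N`
(`sig_epsHom`), in particular for `g` in `H` or `K`.

**From the section to the conclusions** (`conclusions`). If `ε₁ h * u = u * ε₁ k` with `h ∈ H` and
`k ∈ K`, then `h ^ M * d = d' * k ^ M` for every `M`, with `d`, `d'` in fixed finite sets;
pigeonhole gives a lift `d'` of `u` and `m > 0` with `h ^ m * d' = d' * k ^ m`. So intersections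
with conjugates that are nontrivial in the quotient come from nontrivial ones upstairs. The lift is
unique (`section_unique`), because an element of the kernel that commutes with an element outside
of the kernel is trivial in a free group. The image of `H` has infinite index since otherwise it
would contain some `y ^ k` with `k > 0`, and `σ (y ^ k) = y ^ k` would be in `H`
(`index_map_eq_zero`).
-/

/-- The conjugate subgroup `g K g⁻¹`. -/
def conjSubgroup {G : Type*} [Group G] (g : G) (K : Subgroup G) : Subgroup G :=
  K.map (MulAut.conj g).toMonoidHom

/-- `a` and `b` lie in the same double coset `H a K = H b K`. -/
def DosetEq {G : Type*} [Group G] (H K : Subgroup G) (a b : G) : Prop :=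
  ∃ h ∈ H, ∃ k ∈ K, b = h * a * k

/-- `S` is a set of double coset representatives for `(H, K)`. -/
def IsDCRep {G : Type*} [Group G] (H K : Subgroup G) (S : Set G) : Prop :=
  (∀ s ∈ S, H ⊓ conjSubgroup s K ≠ ⊥) ∧
  (∀ s ∈ S, ∀ s' ∈ S, s ≠ s' → ¬ DosetEq H K s s') ∧
  (∀ g : G, H ⊓ conjSubgroup g K ≠ ⊥ → ∃ s ∈ S, DosetEq H K g s)

namespace RankRed

/-! ### Quasi-sections and double cosets -/

section abstract

/-- A set-theoretic section `σ` of `ε` that is multiplicative up to finite error: for each fixed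
`u`, left or right multiplication by `u` changes `σ` by one of finitely many factors. -/
structure QuasiSection {G Q : Type*} [Group G] [Group Q] (ε : G →* Q) (σ : Q → G) : Prop where
  sec : ∀ q, ε (σ q) = q
  left : ∀ u, (Set.range fun r => σ (u * r) * (σ r)⁻¹).Finite
  right : ∀ u, (Set.range fun r => (σ r)⁻¹ * σ (r * u)).Finite

variable {G Q : Type*} [Group G] [Group Q] {ε : G →* Q} {σ : Q → G} {H K : Subgroup G}

/-- `H` meets `g K g⁻¹` nontrivially iff some nontrivial `k ∈ K` is conjugated into `H` by `g`. -/
lemma meets_iff {G : Type*} [Group G] {H K : Subgroup G} {g : G} :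
    H ⊓ conjSubgroup g K ≠ ⊥ ↔ ∃ h ∈ H, ∃ k ∈ K, k ≠ 1 ∧ h * g = g * k := by
  rw [Subgroup.ne_bot_iff_exists_ne_one]
  constructor
  · rintro ⟨⟨h, hh, k, hk, rfl⟩, hne⟩
    refine ⟨_, hh, k, hk, ?_, by simp⟩
    rintro rfl
    exact hne (by ext; simp)
  · rintro ⟨h, hh, k, hk, hk1, e⟩
    refine ⟨⟨h, hh, k, hk, ?_⟩, ?_⟩
    · simp [← e]
    · intro h1
      have : h = 1 := congrArg Subtype.val h1
      subst this
      exact hk1 (by simpa using e)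

/-- A relation `ε h * u = u * ε k` lifts to `h * d = d' * k` with `d`, `d'` in finite sets depending
only on `u`. -/
lemma exists_finite_defect (hσ : QuasiSection ε σ) (hH : ∀ h ∈ H, σ (ε h) = h)
    (hK : ∀ k ∈ K, σ (ε k) = k) {u : Q} {h k : G} (hh : h ∈ H) (hk : k ∈ K)
    (e : ε h * u = u * ε k) :
    ∃ d ∈ Set.range fun r => (σ r)⁻¹ * σ (r * u),
      ∃ d' ∈ Set.range fun r => σ (u * r) * (σ r)⁻¹, ε d' = u ∧ h * d = d' * k := by
  refine ⟨_, ⟨ε h, rfl⟩, _, ⟨ε k, rfl⟩, ?_, ?_⟩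
  · simp [hσ.sec]
  · simp [hH h hh, hK k hk, e]

/-- A relation `ε h * u = u * ε k` lifts, after passing to a power, to a conjugacy by a lift of `u`.
The twist by `h'`, `k'` (which also satisfy `ε h' * u = u * ε k'`) allows `section_unique` to
produce infinitely many relations from one. -/
lemma exists_conj_pow (hσ : QuasiSection ε σ) (hH : ∀ h ∈ H, σ (ε h) = h)
    (hK : ∀ k ∈ K, σ (ε k) = k) {u : Q} {h k h' k' : G} (hh : h ∈ H) (hk : k ∈ K)
    (hh' : h' ∈ H) (hk' : k' ∈ K)
    (e : ε h * u = u * ε k) (e' : ε h' * u = u * ε k') :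
    ∃ m : ℕ, 0 < m ∧ ∃ d' ∈ Set.range fun r => σ (u * r) * (σ r)⁻¹, ε d' = u ∧
      h ^ m * (h'⁻¹ * d' * k') = (h'⁻¹ * d' * k') * k ^ m := by
  have key : ∀ M : ℕ, ∃ d ∈ Set.range fun r => (σ r)⁻¹ * σ (r * u),
      ∃ d' ∈ Set.range fun r => σ (u * r) * (σ r)⁻¹, ε d' = u ∧
        (h' * h ^ M) * d = d' * (k' * k ^ M) := by
    intro M
    refine exists_finite_defect hσ hH hK (H.mul_mem hh' (H.pow_mem hh M))
      (K.mul_mem hk' (K.pow_mem hk M)) ?_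
    have : SemiconjBy u (ε k) (ε h) := e.symm
    have h2 := this.pow_right M
    rw [map_mul, map_mul, map_pow, map_pow, mul_assoc, ← h2.eq, ← mul_assoc, e', mul_assoc]
  choose d hd d' hd' hε heq using key
  have := (hσ.right u).to_subtype
  have := (hσ.left u).to_subtype
  obtain ⟨M, N, hMN, hval⟩ := Finite.exists_ne_map_eq_of_infinite
    (fun M : ℕ => ((⟨d M, hd M⟩, ⟨d' M, hd' M⟩) :
      (Set.range fun r => (σ r)⁻¹ * σ (r * u)) × (Set.range fun r => σ (u * r) * (σ r)⁻¹)))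
  wlog hlt : M < N generalizing M N
  · exact this N M hMN.symm hval.symm (by omega)
  simp only [Prod.mk.injEq, Subtype.mk.injEq] at hval
  obtain ⟨m, rfl⟩ := Nat.exists_eq_add_of_lt hlt
  refine ⟨m + 1, by omega, d' M, hd' M, hε M, ?_⟩
  have h1 := heq M
  have h2 := heq (M + m + 1)
  rw [← hval.1, ← hval.2] at h2
  have h1' : h ^ M * d M = h'⁻¹ * d' M * k' * k ^ M := by
    rw [mul_assoc h'] at h1
    rw [eq_inv_mul_of_mul_eq h1]; group
  have h2' : h ^ (m + 1) * (h ^ M * d M) = h'⁻¹ * d' M * k' * (k ^ (m + 1) * k ^ M) := by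
    rw [mul_assoc h'] at h2
    rw [← mul_assoc, ← pow_add, ← pow_add, show m + 1 + M = M + m + 1 by omega,
      eq_inv_mul_of_mul_eq h2]; group
  rw [h1'] at h2'
  apply mul_right_cancel (b := k ^ M)
  rw [mul_assoc, h2']; group

lemma map_ne_one (hσ : ∀ k ∈ K, σ (ε k) = k) {k : G} (hk : k ∈ K) (h1 : k ≠ 1) : ε k ≠ 1 := by
  intro h
  apply h1
  rw [← hσ k hk, h, ← map_one ε, hσ 1 K.one_mem]

/-- Two elements with the same image that conjugate `k ^ m` to the same `h` agree: they differ by an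
element of the kernel commuting with `k ^ m`, to which `hN` applies. -/
lemma eq_of_commute [IsMulTorsionFree G]
    (hN : ∀ z c : G, ε z = 1 → z * c = c * z → ε c ≠ 1 → z = 1)
    (hK : ∀ k ∈ K, σ (ε k) = k) {s s' h k : G} (hk : k ∈ K) (hk1 : k ≠ 1)
    {m : ℕ} (hm : 0 < m) (es : ε s = ε s') (e : h * s = s * k ^ m) (e' : h * s' = s' * k ^ m) :
    s = s' := by
  have := hN (s⁻¹ * s') (k ^ m) (by simp [es]) ?_
    (map_ne_one hK (K.pow_mem hk m) (fun h0 => hk1 ((pow_eq_one_iff_left hm.ne').1 h0)))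
  · rw [← inv_mul_eq_one, this]
  · rw [mul_assoc, ← e', ← mul_assoc, ← mul_assoc]
    congr 1
    rw [inv_mul_eq_iff_eq_mul, ← mul_assoc, ← e]; group

/-- An element `u` of the quotient has at most one lift `s` with `H ∩ s K s⁻¹` nontrivial. Applying
`exists_conj_pow` with the twists `h' ^ L`, `k' ^ L` shows that `h' ^ L * s * k' ^ (-L)` takes finitely
many values, so that `s` conjugates a power of `k'` to the same power of `h'`, just as `s'` does. -/
lemma section_unique [IsMulTorsionFree G] (hσ : QuasiSection ε σ)
    (hN : ∀ z c : G, ε z = 1 → z * c = c * z → ε c ≠ 1 → z = 1)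
    (hH : ∀ h ∈ H, σ (ε h) = h)
    (hK : ∀ k ∈ K, σ (ε k) = k) {s s' h k h' k' : G} (hh : h ∈ H) (hk : k ∈ K)
    (hh' : h' ∈ H) (hk' : k' ∈ K) (hk1 : k ≠ 1) (hk1' : k' ≠ 1) (es : ε s = ε s')
    (e : h * s = s * k) (e' : h' * s' = s' * k') : s = s' := by
  have eε : ε h * ε s = ε s * ε k := by rw [← map_mul, e, map_mul]
  have eε' : ε h' * ε s = ε s * ε k' := by rw [es, ← map_mul, e', map_mul]
  have key : ∀ L : ℕ, h' ^ L * s * (k' ^ L)⁻¹ ∈ Set.range fun r => σ (ε s * r) * (σ r)⁻¹ := by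
    intro L
    have hL : ε (h' ^ L) * ε s = ε s * ε (k' ^ L) := by
      have : SemiconjBy (ε s) (ε k') (ε h') := eε'.symm
      rw [map_pow, map_pow, (this.pow_right L).eq]
    obtain ⟨m, hm, d', hd', hε, heq⟩ := exists_conj_pow hσ hH hK hh hk (H.pow_mem hh' L)
      (K.pow_mem hk' L) eε hL
    have hs : s = (h' ^ L)⁻¹ * d' * k' ^ L := by
      refine eq_of_commute hN hK hk hk1 hm ?_ ?_ heq
      · rw [map_mul, map_mul, hε, mul_assoc, ← hL, map_inv, inv_mul_cancel_left]
      · have : SemiconjBy s k h := e.symm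
        exact (this.pow_right m).eq.symm
    have : h' ^ L * s * (k' ^ L)⁻¹ = d' := by
      nth_rewrite 1 [hs]
      group
    rwa [this]
  have := (hσ.left (ε s)).to_subtype
  obtain ⟨M, N, hMN, hval⟩ := Finite.exists_ne_map_eq_of_infinite
    (fun L : ℕ => (⟨_, key L⟩ : Set.range fun r => σ (ε s * r) * (σ r)⁻¹))
  wlog hlt : M < N generalizing M N
  · exact this N M hMN.symm hval.symm (by omega)
  simp only [Subtype.mk.injEq] at hval
  obtain ⟨m, rfl⟩ := Nat.exists_eq_add_of_lt hlt
  have h3 : h' ^ (m + 1) * s = s * k' ^ (m + 1) := by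
    rw [show M + m + 1 = M + (m + 1) by omega] at hval
    have : s = h' ^ (m + 1) * s * (k' ^ (m + 1))⁻¹ := by
      apply mul_left_cancel (a := h' ^ M)
      apply mul_right_cancel (b := (k' ^ M)⁻¹)
      rw [hval, add_comm M, pow_add k', add_comm, pow_add h']
      group
    nth_rewrite 2 [this]
    group
  have h4 : SemiconjBy s' k' h' := e'.symm
  exact eq_of_commute hN hK hk' hk1' (Nat.succ_pos m) es h3 (h4.pow_right (m + 1)).eq.symm

/-- If `H` and `K` are fixed by `σ ∘ ε` for a quasi-section `σ`, and no nontrivial element of the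
kernel commutes with an element outside of it, then `ε` preserves double coset representatives and
the corresponding intersections. -/
theorem conclusions [IsMulTorsionFree G] (hσ : QuasiSection ε σ)
    (hN : ∀ z c : G, ε z = 1 → z * c = c * z → ε c ≠ 1 → z = 1)
    (hH : ∀ h ∈ H, σ (ε h) = h) (hK : ∀ k ∈ K, σ (ε k) = k)
    {S : Set G} (hS : IsDCRep H K S) :
    IsDCRep (H.map ε) (K.map ε) (ε '' S) ∧ Set.InjOn ε S ∧
      ∀ s ∈ S, (H ⊓ conjSubgroup s K).map ε = H.map ε ⊓ conjSubgroup (ε s) (K.map ε) := by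
  obtain ⟨h1, h2, h3⟩ := hS
  have hdist : ∀ s ∈ S, ∀ s' ∈ S, DosetEq (H.map ε) (K.map ε) (ε s) (ε s') → s = s' := by
    rintro s hs s' hs' ⟨_, ⟨h, hh, rfl⟩, _, ⟨k, hk, rfl⟩, e⟩
    by_contra hne
    refine h2 s hs s' hs' hne ⟨h, hh, k, hk, ?_⟩
    obtain ⟨a, ha, b, hb, hb1, eab⟩ := meets_iff.1 (h1 s hs)
    obtain ⟨a', ha', b', hb', hb1', eab'⟩ := meets_iff.1 (h1 s' hs')
    refine section_unique hσ hN hH hK (h := a') (k := b') (h' := h * a * h⁻¹) (k' := k⁻¹ * b * k)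
      ha' hb' (H.mul_mem (H.mul_mem hh ha) (H.inv_mem hh))
      (K.mul_mem (K.mul_mem (K.inv_mem hk) hb) hk) hb1' ?_ (by simp [e]) eab' ?_
    · intro h0
      apply hb1
      have : b = k * (k⁻¹ * b * k) * k⁻¹ := by group
      rw [this, h0]; group
    · have : h * a * h⁻¹ * (h * s * k) = h * (a * s) * k := by group
      rw [this, eab]; group
  refine ⟨⟨?_, ?_, ?_⟩, ?_, ?_⟩
  · rintro _ ⟨s, hs, rfl⟩
    obtain ⟨a, ha, b, hb, hb1, eab⟩ := meets_iff.1 (h1 s hs)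
    refine meets_iff.2 ⟨_, ⟨a, ha, rfl⟩, _, ⟨b, hb, rfl⟩, map_ne_one hK hb hb1, ?_⟩
    rw [← map_mul, eab, map_mul]
  · rintro _ ⟨s, hs, rfl⟩ _ ⟨s', hs', rfl⟩ hne hd
    exact hne (congrArg ε (hdist s hs s' hs' hd))
  · intro g hg
    obtain ⟨_, ⟨a, ha, rfl⟩, _, ⟨b, hb, rfl⟩, hb1, eab⟩ := meets_iff.1 hg
    obtain ⟨m, hm, d, -, hd, heq⟩ := exists_conj_pow hσ hH hK ha hb H.one_mem K.one_mem eab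
      (by simp)
    have hb1' : b ≠ 1 := by rintro rfl; simp at hb1
    obtain ⟨s, hs, h, hh, k, hk, e⟩ := h3 d (meets_iff.2 ⟨_, H.pow_mem ha m, _, K.pow_mem hb m,
      fun h0 => hb1' ((pow_eq_one_iff_left hm.ne').1 h0), by simpa using heq⟩)
    exact ⟨_, ⟨s, hs, rfl⟩, _, ⟨h, hh, rfl⟩, _, ⟨k, hk, rfl⟩, by simp [e, hd]⟩
  · intro s hs s' hs' e
    exact hdist s hs s' hs' ⟨1, one_mem _, 1, one_mem _, by simp [e]⟩
  · intro s hs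
    apply le_antisymm
    · rintro _ ⟨_, ⟨hh, k, hk, rfl⟩, rfl⟩
      exact ⟨⟨_, hh, rfl⟩, ε k, ⟨k, hk, rfl⟩, by simp⟩
    · rintro _ ⟨⟨h, hh, rfl⟩, _, ⟨k, hk, rfl⟩, e⟩
      refine ⟨h, ⟨hh, k, hk, ?_⟩, rfl⟩
      simp only [MulEquiv.coe_toMonoidHom, MulAut.conj_apply] at e ⊢
      obtain ⟨a, ha, b, hb, hb1, eab⟩ := meets_iff.1 (h1 s hs)
      have := section_unique hσ hN hH hK (s := s) (s' := h * s * k⁻¹) (h' := h * a * h⁻¹)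
        (k' := k * b * k⁻¹) ha hb (H.mul_mem (H.mul_mem hh ha) (H.inv_mem hh))
        (K.mul_mem (K.mul_mem hk hb) (K.inv_mem hk)) hb1 (by simpa using hb1)
        (by simp [← e]) eab (by
          have : h * a * h⁻¹ * (h * s * k⁻¹) = h * (a * s) * k⁻¹ := by group
          rw [this, eab]; group)
      nth_rewrite 1 [this]
      group

end abstract

/-! ### Commuting elements of a free group -/

lemma eq_of_of_commute {ι : Type*} {i j : ι}
    (h : FreeGroup.of i * FreeGroup.of j = FreeGroup.of j * FreeGroup.of i) : i = j := by
  classical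
  have := congrArg FreeGroup.toWord h
  simp only [FreeGroup.toWord_mul, FreeGroup.toWord_of, List.cons_append, List.nil_append,
    FreeGroup.reduce.cons, FreeGroup.reduce_nil] at this
  exact (by simpa using this : i = j ∧ j = i).1

lemma mem_zpowers_of {ι : Type*} [Subsingleton ι] (i : ι) (g : FreeGroup ι) :
    ∃ k : ℤ, g = FreeGroup.of i ^ k := by
  induction g using FreeGroup.induction_on with
  | C1 => exact ⟨0, by simp⟩
  | of j => exact ⟨1, by simp [Subsingleton.elim j i]⟩
  | inv_of j _ => exact ⟨-1, by simp [Subsingleton.elim j i]⟩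
  | mul x y hx hy =>
    obtain ⟨a, rfl⟩ := hx
    obtain ⟨b, rfl⟩ := hy
    exact ⟨a + b, by rw [zpow_add]⟩

/-- Commuting elements of a free group have a common power, as they generate a free abelian subgroup
which is free (Nielsen–Schreier), hence cyclic. -/
lemma commute_powers {α : Type*} {z c : FreeGroup α} (h : z * c = c * z) (hz : z ≠ 1) :
    ∃ i j : ℤ, i ≠ 0 ∧ z ^ j = c ^ i := by
  have hc := Subgroup.isMulCommutative_closure (k := {z, c}) (by
    rintro x (rfl | rfl) y (rfl | rfl) <;> simp [h])
  set A := Subgroup.closure ({z, c} : Set (FreeGroup α)) with hA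
  have hcomm : ∀ a b : A, a * b = b * a := fun a b => hc.is_comm.comm a b
  obtain ⟨ι, ⟨b⟩⟩ := (inferInstance : IsFreeGroup A).nonempty_basis
  let f := b.repr
  have : Subsingleton ι := ⟨fun i j => eq_of_of_commute (by
    apply f.symm.injective
    rw [map_mul, map_mul, hcomm])⟩
  let z' : A := ⟨z, Subgroup.subset_closure (by simp)⟩
  let c' : A := ⟨c, Subgroup.subset_closure (by simp)⟩
  rcases isEmpty_or_nonempty ι with hι | ⟨⟨i⟩⟩
  · have : z' = 1 := f.injective (Subsingleton.elim _ _)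
    exact absurd (congrArg Subtype.val this) hz
  · obtain ⟨p, hp⟩ := mem_zpowers_of i (f z')
    obtain ⟨q, hq⟩ := mem_zpowers_of i (f c')
    refine ⟨p, q, ?_, ?_⟩
    · rintro rfl
      have : z' = 1 := f.injective (by simpa using hp)
      exact hz (congrArg Subtype.val this)
    · have : z' ^ q = c' ^ p := f.injective (by
        rw [map_zpow, map_zpow, hp, hq, ← zpow_mul, ← zpow_mul, mul_comm])
      simpa using congrArg Subtype.val this

/-- Only the trivial element of the kernel commutes with an element outside of the kernel. -/
lemma eq_one_of_commute {α β : Type*} (ε : FreeGroup α →* FreeGroup β) (z c : FreeGroup α)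
    (hz : ε z = 1) (h : z * c = c * z) (hc : ε c ≠ 1) : z = 1 := by
  by_contra hne
  obtain ⟨i, j, hi, e⟩ := commute_powers h hne
  have := congrArg ε e
  rw [map_zpow, map_zpow, hz, one_zpow] at this
  exact hc ((IsMulTorsionFree.zpow_eq_one_iff_left hi).1 this.symm)

open FreeGroup hiding map_mul map_inv map_one

/-! ### Initial runs of reduced words -/

/-- The exponent `±1` encoded by the sign of a letter. -/
def sg (s : Bool) : ℤ := if s then 1 else -1

lemma letter_eq {α : Type*} (a : α) (s : Bool) : mk [(a, s)] = of a ^ sg s := by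
  cases s
  · simp [sg, of, inv_mk, invRev]
  · simp [sg, of]

lemma mk_cons {α : Type*} (c : α × Bool) (l) : mk (c :: l) = mk [c] * mk l := by
  rw [mul_mk]; rfl

section runs
variable {α : Type*} [DecidableEq α]

/-- The exponent of the maximal initial power of `a` in a reduced word. For words that are not reduced
it is the exponent sum of the maximal initial block of letters `a ^ ±1`. -/
def run (a : α) : List (α × Bool) → ℤ
  | [] => 0
  | (b, s) :: l => if b = a then sg s + run a l else 0

@[simp] lemma run_nil (a : α) : run a [] = 0 := rfl

lemma run_cons_self (a : α) (s : Bool) (l) : run a ((a, s) :: l) = sg s + run a l := by simp [run]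

lemma run_cons_ne {a b : α} (h : b ≠ a) (s : Bool) (l) : run a ((b, s) :: l) = 0 := by simp [run, h]

/-- In a reduced word the letters of an initial run all have the same sign. -/
lemma run_sign {a : α} {s : Bool} {l : List (α × Bool)} (h : IsReduced ((a, s) :: l)) :
    1 ≤ sg s * run a ((a, s) :: l) := by
  induction l with
  | nil => cases s <;> simp [run, sg]
  | cons c l ih =>
    obtain ⟨b, t⟩ := c
    rw [isReduced_cons_cons] at h
    rw [run_cons_self]
    by_cases hb : b = a
    · subst hb
      obtain rfl : s = t := h.1 rfl
      have := ih h.2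
      have h2 : sg s * sg s = 1 := by cases s <;> simp [sg]
      rw [mul_add, h2]; linarith
    · rw [run_cons_ne hb]
      cases s <;> simp [sg]

lemma run_ne_zero {a : α} {s : Bool} {l : List (α × Bool)} (h : IsReduced ((a, s) :: l)) :
    run a ((a, s) :: l) ≠ 0 := by
  intro h0
  have := run_sign h
  rw [h0] at this
  simp at this

/-- The exponent of the maximal initial power of the generator `a` in the reduced word of `q`. -/
def ix (a : α) (q : FreeGroup α) : ℤ := run a q.toWord

@[simp] lemma ix_one (a : α) : ix a 1 = 0 := by simp [ix]

/-- Induction on elements of a free group by adding letters on the left without cancellation. -/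
lemma word_induction {P : FreeGroup α → Prop} (one : P 1)
    (cons : ∀ a s g, IsReduced ((a, s) :: g.toWord) → P g → P (of a ^ sg s * g)) (g) : P g := by
  rw [← mk_toWord (x := g)]
  have hr := isReduced_toWord (x := g)
  generalize g.toWord = l at hr
  induction l with
  | nil => exact one
  | cons c l ih =>
    have hl : IsReduced l := hr.infix ⟨[c], [], by simp⟩
    rw [mk_cons, letter_eq]
    refine cons _ _ _ ?_ (ih hl)
    rw [toWord_mk, hl.reduce_eq]
    exact hr

lemma ix_of_mul (a : α) (q : FreeGroup α) : ix a (of a * q) = ix a q + 1 := by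
  unfold ix
  rw [toWord_mul, toWord_of, List.cons_append, List.nil_append, reduce.cons, reduce_toWord]
  rcases q.toWord with _ | ⟨⟨b, s⟩, l⟩
  · simp [run, sg]
  · by_cases hb : a = b
    · subst hb
      cases s <;> simp [run, sg]; ring
    · simp [run, sg, hb, Ne.symm hb]

lemma ix_zpow_mul (a : α) (k : ℤ) (q : FreeGroup α) : ix a (of a ^ k * q) = ix a q + k := by
  induction k using Int.induction_on with
  | zero => simp
  | succ i ih => rw [add_comm (i : ℤ) 1, zpow_add, zpow_one, mul_assoc, ix_of_mul, ih]; ring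
  | pred i ih =>
    have := ix_of_mul a (of a ^ (-(i : ℤ) - 1) * q)
    rw [← mul_assoc, ← zpow_one_add, show 1 + (-(i : ℤ) - 1) = -i by ring, ih] at this
    linarith

lemma ix_zpow (a : α) (k : ℤ) : ix a (of a ^ k) = k := by
  simpa using ix_zpow_mul a k 1

lemma ix_eq_zero {a b : α} (h : a ≠ b) {q : FreeGroup α} (hq : ix a q ≠ 0) : ix b q = 0 := by
  unfold ix at *
  generalize q.toWord = l at *
  rcases l with _ | ⟨⟨c, s⟩, l⟩
  · rfl
  · by_cases hc : c = a
    · exact run_cons_ne (hc ▸ h) _ _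
    · exact absurd (run_cons_ne hc _ _) hq

lemma ix_letter_ne_zero {a : α} {s : Bool} {g : FreeGroup α}
    (h : IsReduced ((a, s) :: g.toWord)) : ix a (of a ^ sg s * g) ≠ 0 := by
  rw [ix_zpow_mul, add_comm]
  have := run_ne_zero h
  rwa [run_cons_self] at this

/-- Right multiplication by `a` does not change the initial exponent of a different letter `b`, nor
that of `a` unless the element is itself a power of `a`. -/
lemma ix_mul_of (a b : α) (r : FreeGroup α)
    (h : b ≠ a ∨ r ∉ Subgroup.zpowers (of a)) : ix b (r * of a) = ix b r := by
  induction r using word_induction generalizing b with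
  | one =>
    rcases h with h | h
    · rw [one_mul, ix_one]
      exact ix_eq_zero h.symm (by rw [← zpow_one (of a), ix_zpow]; simp)
    · exact absurd (Subgroup.one_mem _) h
  | cons c s g hred ih =>
    have hg : c = a → of c ^ sg s * g ∉ Subgroup.zpowers (of a) → g ∉ Subgroup.zpowers (of a) := by
      rintro rfl h1 h2
      exact h1 (Subgroup.mul_mem _ (Subgroup.zpow_mem _ (Subgroup.mem_zpowers _) _) h2)
    by_cases hcb : c = b
    · subst hcb
      rw [mul_assoc, ix_zpow_mul, ix_zpow_mul, ih]
      by_cases hca : c = a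
      · exact h.imp_right (hg hca)
      · exact Or.inl hca
    · have hne := ix_letter_ne_zero hred
      rw [ix_eq_zero hcb hne]
      by_cases hc : c ≠ a ∨ g ∉ Subgroup.zpowers (of a)
      · refine ix_eq_zero hcb ?_
        rwa [mul_assoc, ix_zpow_mul, ih c hc, ← ix_zpow_mul]
      · push Not at hc
        obtain ⟨rfl, k, rfl⟩ := hc
        have : of c ^ sg s * (fun x => of c ^ x) k * of c = of c ^ (sg s + k + 1) := by
          rw [zpow_add, zpow_add, zpow_one]
        rw [this]
        by_cases h0 : sg s + k + 1 = 0
        · rw [h0, zpow_zero, ix_one]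
        · exact ix_eq_zero hcb (by rwa [ix_zpow])

end runs

/-! ### The section of the rank-reducing homomorphism -/

section cocycle
variable {α : Type*} {G : Type*} [Group G] (c : α → FreeGroup α → G)

/-- Left multiplication by the generator `a` on the free group, lifted to a skew product with `G` by
the cocycle `c`. -/
def stepPerm (a : α) : Equiv.Perm (FreeGroup α × G) where
  toFun p := (of a * p.1, c a p.1 * p.2)
  invFun p := ((of a)⁻¹ * p.1, (c a ((of a)⁻¹ * p.1))⁻¹ * p.2)
  left_inv p := by simp
  right_inv p := by simp

/-- The unique solution of `cocyc c 1 = 1` and `cocyc c (of a * r) = c a r * cocyc c r`. -/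
def cocyc (q : FreeGroup α) : G := (FreeGroup.lift (stepPerm c) q (1, 1)).2

@[simp] lemma cocyc_one : cocyc c 1 = 1 := by simp [cocyc]

lemma lift_stepPerm_fst (q : FreeGroup α) (p : FreeGroup α × G) :
    (FreeGroup.lift (stepPerm c) q p).1 = q * p.1 := by
  induction q using FreeGroup.induction_on generalizing p with
  | C1 => simp
  | of a => simp [stepPerm]
  | inv_of a _ =>
    rw [map_inv, lift_apply_of, Equiv.Perm.inv_def]
    simp [stepPerm]
  | mul u v hu hv => rw [map_mul, Equiv.Perm.mul_apply, hu, hv, mul_assoc]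

lemma cocyc_of_mul (a : α) (r : FreeGroup α) : cocyc c (of a * r) = c a r * cocyc c r := by
  unfold cocyc
  rw [map_mul, Equiv.Perm.mul_apply, lift_apply_of]
  simp only [stepPerm, Equiv.coe_fn_mk, lift_stepPerm_fst, mul_one]

end cocycle

section finiteness
open scoped Pointwise
variable {α : Type*} {G : Type*} [Group G] {σ : FreeGroup α → G}

/-- It suffices to bound the left defects of `σ` for generators. -/
lemma finite_left (h : ∀ a, (Set.range fun r => σ (of a * r) * (σ r)⁻¹).Finite)
    (u : FreeGroup α) : (Set.range fun r => σ (u * r) * (σ r)⁻¹).Finite := by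
  induction u using FreeGroup.induction_on with
  | C1 => exact (Set.finite_singleton 1).subset (by rintro _ ⟨r, rfl⟩; simp)
  | of a => exact h a
  | inv_of a ha =>
    refine ha.inv.subset ?_
    rintro _ ⟨r, rfl⟩
    exact ⟨(of a)⁻¹ * r, by simp⟩
  | mul u v hu hv =>
    refine (hu.mul hv).subset ?_
    rintro _ ⟨r, rfl⟩
    exact ⟨_, ⟨v * r, rfl⟩, _, ⟨r, rfl⟩, by simp [mul_assoc]⟩

/-- It suffices to bound the right defects of `σ` for generators. -/
lemma finite_right (h : ∀ a, (Set.range fun r => (σ r)⁻¹ * σ (r * of a)).Finite)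
    (u : FreeGroup α) : (Set.range fun r => (σ r)⁻¹ * σ (r * u)).Finite := by
  induction u using FreeGroup.induction_on with
  | C1 => exact (Set.finite_singleton 1).subset (by rintro _ ⟨r, rfl⟩; simp)
  | of a => exact h a
  | inv_of a ha =>
    refine ha.inv.subset ?_
    rintro _ ⟨r, rfl⟩
    exact ⟨r * (of a)⁻¹, by simp⟩
  | mul u v hu hv =>
    refine (hu.mul hv).subset ?_
    rintro _ ⟨r, rfl⟩
    exact ⟨_, ⟨r, rfl⟩, _, ⟨r * u, rfl⟩, by simp [mul_assoc]⟩

end finiteness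

section theSection
variable {α : Type*} (x y : α) (L : ℤ)

/-- The homomorphism that kills one rank, sending the extra letter `none` to `y ^ L * x ^ L * y ^ L`. -/
def epsHom : FreeGroup (Option α) →* FreeGroup α :=
  FreeGroup.lift fun o => o.elim (of y ^ L * of x ^ L * of y ^ L) of

@[simp] lemma epsHom_none : epsHom x y L (of none) = of y ^ L * of x ^ L * of y ^ L := by
  simp [epsHom]

@[simp] lemma epsHom_some (a : α) : epsHom x y L (of (some a)) = of a := by
  simp [epsHom]

/-- The element `P = y⁻ᴸ t y⁻ᴸ x⁻ᴸ` of the kernel of `epsHom`, where `t` is the letter `none`. -/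
def kerElt : FreeGroup (Option α) :=
  of (some y) ^ (-L) * of none * of (some y) ^ (-L) * of (some x) ^ (-L)

lemma epsHom_kerElt : epsHom x y L (kerElt x y L) = 1 := by
  simp only [kerElt, map_mul, map_zpow, epsHom_none, epsHom_some]; group

/-- The lift of an initial power `x ^ i`: long powers are rewritten using the letter `none`. The
choice is made so that `pw (-i) = (pw i)⁻¹` and consecutive quotients take finitely many values. -/
def pw (i : ℤ) : FreeGroup (Option α) :=
  if L ≤ i then kerElt x y L * of (some x) ^ i
  else if i ≤ -L then of (some x) ^ i * (kerElt x y L)⁻¹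
  else of (some x) ^ i

variable {x y L}

lemma pw_of_abs_lt {i : ℤ} (h : |i| < L) : pw x y L i = of (some x) ^ i := by
  rw [abs_lt] at h
  rw [pw, if_neg (by omega), if_neg (by omega)]

lemma epsHom_pw (i : ℤ) : epsHom x y L (pw x y L i) = of x ^ i := by
  unfold pw
  split_ifs <;> simp [epsHom_kerElt]

lemma pw_zero (hL : 0 < L) : pw x y L 0 = 1 := by
  rw [pw_of_abs_lt (by simpa using hL), zpow_zero]

lemma pw_self : pw x y L L = of (some y) ^ (-L) * of none * of (some y) ^ (-L) := by
  rw [pw, if_pos le_rfl, kerElt]; group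

lemma pw_neg_self (hL : 0 < L) :
    pw x y L (-L) = of (some y) ^ L * (of none)⁻¹ * of (some y) ^ L := by
  rw [pw, if_neg (by omega), if_pos le_rfl, kerElt]; group

lemma finite_pw_left (hL : 0 < L) : (Set.range fun i => pw x y L (i + 1) * (pw x y L i)⁻¹).Finite := by
  refine (((Set.finite_Icc (-L) L).image fun i => pw x y L (i + 1) * (pw x y L i)⁻¹).union
    (Set.toFinite {of (some x), kerElt x y L * of (some x) * (kerElt x y L)⁻¹})).subset ?_
  rintro _ ⟨i, rfl⟩
  by_cases h : i ∈ Set.Icc (-L) L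
  · exact Or.inl ⟨i, h, rfl⟩
  · right
    rw [Set.mem_Icc] at h
    by_cases h1 : L ≤ i
    · right
      simp only [pw, if_pos h1, if_pos (show L ≤ i + 1 by omega), Set.mem_singleton_iff]; group
    · left
      simp only [pw, if_neg h1, if_neg (show ¬ L ≤ i + 1 by omega),
        if_pos (show i ≤ -L by omega), if_pos (show i + 1 ≤ -L by omega)]; group

lemma finite_pw_right (hL : 0 < L) : (Set.range fun i => (pw x y L i)⁻¹ * pw x y L (i + 1)).Finite := by
  refine (((Set.finite_Icc (-L) L).image fun i => (pw x y L i)⁻¹ * pw x y L (i + 1)).union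
    (Set.toFinite {of (some x), kerElt x y L * of (some x) * (kerElt x y L)⁻¹})).subset ?_
  rintro _ ⟨i, rfl⟩
  by_cases h : i ∈ Set.Icc (-L) L
  · exact Or.inl ⟨i, h, rfl⟩
  · right
    rw [Set.mem_Icc] at h
    by_cases h1 : L ≤ i
    · left
      simp only [pw, if_pos h1, if_pos (show L ≤ i + 1 by omega)]; group
    · right
      simp only [pw, if_neg h1, if_neg (show ¬ L ≤ i + 1 by omega),
        if_pos (show i ≤ -L by omega), if_pos (show i + 1 ≤ -L by omega),
        Set.mem_singleton_iff]; group

variable [DecidableEq α] (x y L)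

/-- The section of `epsHom`, built letter by letter from the left. A letter `x ^ ±1` contributes the
quotient of the lifts of the initial power of `x` after and before adding it; all other letters are
kept. -/
def sig : FreeGroup α → FreeGroup (Option α) :=
  cocyc fun a r => if a = x then pw x y L (ix x r + 1) * (pw x y L (ix x r))⁻¹ else of (some a)

variable {x y L}

@[simp] lemma sig_one : sig x y L 1 = 1 := cocyc_one _

lemma sig_of_mul_self (r : FreeGroup α) :
    sig x y L (of x * r) = pw x y L (ix x r + 1) * (pw x y L (ix x r))⁻¹ * sig x y L r := by
  rw [sig, cocyc_of_mul, if_pos rfl]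

lemma sig_of_mul_ne {b : α} (hb : b ≠ x) (r : FreeGroup α) :
    sig x y L (of b * r) = of (some b) * sig x y L r := by
  rw [sig, cocyc_of_mul, if_neg hb]

lemma sig_zpow_mul_self (k : ℤ) (r : FreeGroup α) :
    sig x y L (of x ^ k * r) = pw x y L (ix x r + k) * (pw x y L (ix x r))⁻¹ * sig x y L r := by
  induction k using Int.induction_on with
  | zero => simp
  | succ i ih =>
    rw [add_comm (i : ℤ) 1, zpow_add, zpow_one, mul_assoc, sig_of_mul_self, ih, ix_zpow_mul,
      show ix x r + (1 + (i : ℤ)) = ix x r + i + 1 by ring]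
    group
  | pred i ih =>
    have := sig_of_mul_self (x := x) (y := y) (L := L) (of x ^ (-(i : ℤ) - 1) * r)
    rw [← mul_assoc, ← zpow_one_add, show 1 + (-(i : ℤ) - 1) = -i by ring, ih, ix_zpow_mul,
      show ix x r + (-(i : ℤ) - 1) + 1 = ix x r + -i by ring, mul_assoc, mul_assoc] at this
    rw [mul_assoc, mul_left_cancel this]
    group

lemma sig_zpow_mul_ne {b : α} (hb : b ≠ x) (k : ℤ) (r : FreeGroup α) :
    sig x y L (of b ^ k * r) = of (some b) ^ k * sig x y L r := by
  induction k using Int.induction_on with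
  | zero => simp
  | succ i ih =>
    rw [add_comm (i : ℤ) 1, zpow_add, zpow_one, mul_assoc, sig_of_mul_ne hb, ih]
    group
  | pred i ih =>
    have := sig_of_mul_ne (y := y) (L := L) hb (of b ^ (-(i : ℤ) - 1) * r)
    rw [← mul_assoc, ← zpow_one_add, show 1 + (-(i : ℤ) - 1) = -i by ring, ih] at this
    rw [← inv_mul_eq_iff_eq_mul] at this
    rw [← this]
    group

lemma epsHom_sig (q : FreeGroup α) : epsHom x y L (sig x y L q) = q := by
  induction q using word_induction with
  | one => simp
  | cons a s g _ ih =>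
    by_cases ha : a = x
    · subst ha
      rw [sig_zpow_mul_self, map_mul, map_mul, map_inv, epsHom_pw, epsHom_pw, ih]
      group
    · rw [sig_zpow_mul_ne ha, map_mul, map_zpow, epsHom_some, ih]

lemma sig_mul_of_ne {a : α} (ha : a ≠ x) (r : FreeGroup α) :
    sig x y L (r * of a) = sig x y L r * of (some a) := by
  induction r using word_induction with
  | one => simpa using sig_of_mul_ne (y := y) (L := L) ha 1
  | cons b s g _ ih =>
    rw [mul_assoc]
    by_cases hb : b = x
    · subst hb
      rw [sig_zpow_mul_self, sig_zpow_mul_self, ix_mul_of _ _ _ (Or.inl ha.symm), ih]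
      simp [mul_assoc]
    · rw [sig_zpow_mul_ne hb, sig_zpow_mul_ne hb, ih, mul_assoc]

lemma sig_zpow_self (hL : 0 < L) (k : ℤ) : sig x y L (of x ^ k) = pw x y L k := by
  simpa [pw_zero hL] using sig_zpow_mul_self (x := x) (y := y) (L := L) k 1

/-- The right defect of `sig` for `x` is determined by the final power of `x`. -/
lemma sig_mul_of_self (hL : 0 < L) (r : FreeGroup α) :
    ∃ k : ℤ, (sig x y L r)⁻¹ * sig x y L (r * of x) = (pw x y L k)⁻¹ * pw x y L (k + 1) := by
  by_cases hr : r ∈ Subgroup.zpowers (of x)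
  · obtain ⟨k, rfl⟩ := hr
    refine ⟨k, ?_⟩
    simp only
    rw [← zpow_add_one, sig_zpow_self hL, sig_zpow_self hL]
  induction r using word_induction with
  | one => exact absurd (Subgroup.one_mem _) hr
  | cons b s g _ ih =>
    by_cases hg : g ∈ Subgroup.zpowers (of x)
    · obtain ⟨k, rfl⟩ := hg
      have hb : b ≠ x := by
        rintro rfl
        exact hr (Subgroup.mul_mem _ (Subgroup.zpow_mem _ (Subgroup.mem_zpowers _) _)
          (Subgroup.zpow_mem _ (Subgroup.mem_zpowers _) _))
      refine ⟨k, ?_⟩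
      simp only
      rw [mul_assoc, ← zpow_add_one, sig_zpow_mul_ne hb, sig_zpow_mul_ne hb, sig_zpow_self hL,
        sig_zpow_self hL]
      group
    · obtain ⟨k, hk⟩ := ih hg
      refine ⟨k, ?_⟩
      rw [← hk, mul_assoc]
      by_cases hb : b = x
      · subst hb
        rw [sig_zpow_mul_self, sig_zpow_mul_self, ix_mul_of _ _ _ (Or.inr hg)]
        group
      · rw [sig_zpow_mul_ne hb, sig_zpow_mul_ne hb]
        group

theorem quasiSection_sig (hL : 0 < L) : QuasiSection (epsHom x y L) (sig x y L) where
  sec := epsHom_sig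
  left := by
    refine finite_left fun a => ?_
    by_cases ha : a = x
    · subst ha
      refine (finite_pw_left (x := a) (y := y) hL).subset ?_
      rintro _ ⟨r, rfl⟩
      exact ⟨ix a r, by simp [sig_of_mul_self]⟩
    · refine (Set.finite_singleton (of (some a))).subset ?_
      rintro _ ⟨r, rfl⟩
      simp [sig_of_mul_ne ha]
  right := by
    refine finite_right fun a => ?_
    by_cases ha : a = x
    · subst ha
      refine (finite_pw_right (x := a) (y := y) hL).subset ?_
      rintro _ ⟨r, rfl⟩
      obtain ⟨k, hk⟩ := sig_mul_of_self (x := a) (y := y) hL r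
      exact ⟨k, hk.symm⟩
    · refine (Set.finite_singleton (of (some a))).subset ?_
      rintro _ ⟨r, rfl⟩
      simp [sig_mul_of_ne ha]

variable (y) in
/-- The sign of the letter `none` if the word has the form `y ^ j * none ^ ±1 * ⋯`, and `0`
otherwise. It records a final `y ^ (±L)` coming from the image of `none` that lengthens the initial
power of `y`. -/
def tau : List (Option α × Bool) → ℤ
  | [] => 0
  | (none, s) :: _ => sg s
  | (some a, _) :: l => if a = y then tau l else 0

lemma tau_cases (l : List (Option α × Bool)) : tau y l = -1 ∨ tau y l = 0 ∨ tau y l = 1 := by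
  induction l with
  | nil => simp [tau]
  | cons c l ih =>
    obtain ⟨_ | a, s⟩ := c
    · cases s <;> simp [tau, sg]
    · by_cases h : a = y <;> simp [tau, h, ih]

lemma tau_add_sg_ne {s : Bool} {l : List (Option α × Bool)} (h : IsReduced ((none, s) :: l))
    (h0 : run (some y) l = 0) : tau y l + sg s ≠ 0 := by
  rcases l with _ | ⟨⟨_ | a, t⟩, l⟩
  · cases s <;> simp [tau, sg]
  · rw [isReduced_cons_cons] at h
    obtain rfl : s = t := h.1 rfl
    cases s <;> simp [tau, sg]
  · by_cases ha : a = y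
    · subst ha
      exact absurd h0 (run_ne_zero (h.infix ⟨[(none, s)], [], by simp⟩))
    · cases s <;> simp [tau, sg, ha]

/-- If all exponents of `x` and `y` in a reduced word are smaller than `L`, the initial exponents of
its image under `epsHom` can be read off from the word: an occurrence of `none` never cancels
completely, and `y ^ L * x ^ L * y ^ L` leaves `x ^ L` intact. Consequently `sig` recovers the word. -/
theorem sig_epsHom_mk (hxy : x ≠ y) (hL : 0 < L) (l : List (Option α × Bool)) (hl : IsReduced l)
    (hb : ∀ s, s <:+ l → |run (some x) s| < L ∧ |run (some y) s| < L) :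
    (∀ a, a ≠ y → ix a (epsHom x y L (mk l)) = run (some a) l) ∧
      ix y (epsHom x y L (mk l)) = run (some y) l + tau y l * L ∧
      sig x y L (epsHom x y L (mk l)) = mk l := by
  induction l with
  | nil =>
    have : mk ([] : List (Option α × Bool)) = 1 := rfl
    simp [this, tau]
  | cons c l ih =>
    obtain ⟨o, s⟩ := c
    obtain ⟨ih1, ih2, ih3⟩ := ih (hl.infix ⟨[(o, s)], [], by simp⟩)
      fun s hs => hb s (hs.trans (List.suffix_cons _ _))
    rw [mk_cons, letter_eq, map_mul, map_zpow]
    set g := epsHom x y L (mk l) with hg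
    have hself := hb _ List.suffix_rfl
    have htail := hb l (List.suffix_cons _ _)
    rw [abs_lt, abs_lt] at hself htail
    have hrn := run_ne_zero hl
    cases o with
    | some a =>
      rw [epsHom_some]
      by_cases hay : a = y
      · subst hay
        have e : ix a (of a ^ sg s * g) = run (some a) ((some a, s) :: l) + tau a l * L := by
          rw [ix_zpow_mul, ih2, run_cons_self]; ring
        have hne : ix a (of a ^ sg s * g) ≠ 0 := by
          rw [e]
          rcases tau_cases (y := a) l with h | h | h <;> rw [h]
          · omega
          · simpa using hrn
          · omega
        refine ⟨fun b hb => ?_, ?_, ?_⟩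
        · rw [ix_eq_zero hb.symm hne, run_cons_ne (by simpa using hb.symm)]
        · rw [e]; simp [tau]
        · rw [sig_zpow_mul_ne hxy.symm, ih3]
      · have e : ix a (of a ^ sg s * g) = run (some a) ((some a, s) :: l) := by
          rw [ix_zpow_mul, ih1 a hay, run_cons_self]; ring
        rw [← e] at hrn
        refine ⟨fun b hb => ?_, ?_, ?_⟩
        · by_cases hba : a = b
          · rw [← hba, e]
          · rw [ix_eq_zero hba hrn, run_cons_ne (by simpa using hba)]
        · rw [ix_eq_zero hay hrn, run_cons_ne (by simpa using hay)]
          simp [tau, hay]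
        · by_cases hax : a = x
          · subst hax
            rw [run_cons_self] at hself
            rw [sig_zpow_mul_self, ih3, ih1 _ hxy,
              pw_of_abs_lt (i := run (some a) l) (abs_lt.2 htail.1),
              pw_of_abs_lt (i := run (some a) l + sg s)
                (abs_lt.2 ⟨by linarith [hself.1.1], by linarith [hself.1.2]⟩)]
            group
          · rw [sig_zpow_mul_ne hax, ih3]
    | none =>
      have hs : sg s * sg s = 1 := by cases s <;> simp [sg]
      have hsL : sg s * L ≠ 0 := mul_ne_zero (by cases s <;> simp [sg]) hL.ne'
      rw [epsHom_none]
      -- The three blocks are added one at a time: the inner `y`-power does not vanish, so the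
      -- `x`-power added next has exponent exactly `±L`, where `pw` produces the letter `none`.
      have e0 : (of y ^ L * of x ^ L * of y ^ L) ^ sg s * g =
          of y ^ (sg s * L) * (of x ^ (sg s * L) * (of y ^ (sg s * L) * g)) := by
        cases s <;> simp [sg, mul_assoc]
      rw [e0]
      have hy : ix y (of y ^ (sg s * L) * g) ≠ 0 := by
        rw [ix_zpow_mul, ih2]
        have h1 : run (some y) l + tau y l * L + sg s * L
          = run (some y) l + (tau y l + sg s) * L := by ring
        rw [h1]
        by_cases h0 : run (some y) l = 0
        · rw [h0, zero_add]
          exact mul_ne_zero (tau_add_sg_ne hl h0) hL.ne'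
        · intro h2
          have h3 : L ∣ run (some y) l := ⟨-(tau y l + sg s), by linarith⟩
          exact h0 (Int.eq_zero_of_abs_lt_dvd h3 (abs_lt.2 htail.2))
      have hx0 := ix_eq_zero hxy.symm hy
      have hx : ix x (of x ^ (sg s * L) * (of y ^ (sg s * L) * g)) ≠ 0 := by
        rw [ix_zpow_mul, hx0, zero_add]; exact hsL
      have hy0 := ix_eq_zero hxy hx
      have hyy : ix y (of y ^ (sg s * L) * (of x ^ (sg s * L) * (of y ^ (sg s * L) * g)))
          = sg s * L := by rw [ix_zpow_mul, hy0, zero_add]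
      refine ⟨fun b hb => ?_, ?_, ?_⟩
      · rw [ix_eq_zero hb.symm (by rw [hyy]; exact hsL), run_cons_ne (by simp)]
      · rw [hyy, run_cons_ne (by simp)]; simp [tau]
      · rw [sig_zpow_mul_ne hxy.symm, sig_zpow_mul_self, sig_zpow_mul_ne hxy.symm, hx0, ih3,
          zero_add, pw_zero hL]
        cases s
        · simp only [sg, Bool.false_eq_true, if_false, neg_mul, one_mul, pw_neg_self hL]; group
        · simp only [sg, if_true, one_mul, pw_self]; group

lemma sig_epsHom (hxy : x ≠ y) (hL : 0 < L) (g : FreeGroup (Option α))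
    (hb : ∀ s, s <:+ g.toWord → |run (some x) s| < L ∧ |run (some y) s| < L) :
    sig x y L (epsHom x y L g) = g := by
  have := (sig_epsHom_mk hxy hL g.toWord isReduced_toWord hb).2.2
  rwa [mk_toWord] at this

end theSection

/-! ### Cosets met by reduced words -/

section core
variable {β : Type*} [DecidableEq β] {H : Subgroup (FreeGroup β)}

lemma suffix_append_cases {γ : Type*} {s l₁ l₂ : List γ} (h : s <:+ l₁ ++ l₂) :
    s <:+ l₂ ∨ ∃ s₁, s₁ <:+ l₁ ∧ s = s₁ ++ l₂ := by
  obtain ⟨p, hp⟩ := h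
  rcases List.append_eq_append_iff.1 hp with ⟨a, h1, h2⟩ | ⟨a, h1, h2⟩
  · exact Or.inr ⟨a, ⟨p, h1.symm⟩, h2⟩
  · exact Or.inl ⟨a, h2.symm⟩

/-- The cosets visited by reading (from the right) the reduced words of elements of a finitely
generated subgroup lie in a finite set. -/
lemma exists_core (hH : H.FG) : ∃ V : Set (FreeGroup β ⧸ H), V.Finite ∧
    ∀ h ∈ H, ∀ s, s <:+ h.toWord → ((mk s : FreeGroup β) : FreeGroup β ⧸ H) ∈ V := by
  obtain ⟨T, rfl⟩ := hH
  set H := Subgroup.closure (T : Set (FreeGroup β)) with hHdef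
  let V : Set (FreeGroup β ⧸ H) := insert ((1 : FreeGroup β) : FreeGroup β ⧸ H)
    (⋃ t ∈ T, (fun s => ((mk s : FreeGroup β) : FreeGroup β ⧸ H)) '' {s | s ∈ t.toWord.tails})
  refine ⟨V, ?_, ?_⟩
  · refine Set.Finite.insert _ (Set.Finite.biUnion T.finite_toSet fun t _ => ?_)
    exact (List.finite_toSet _).image _
  -- The closure argument works with words that need not be reduced; reduction is handled afterwards.
  have h1 : ∀ h ∈ H, ∃ l, mk l = h ∧
      ∀ s, s <:+ l → ((mk s : FreeGroup β) : FreeGroup β ⧸ H) ∈ V := by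
    intro h hh
    induction hh using Subgroup.closure_induction with
    | mem t ht =>
      refine ⟨t.toWord, mk_toWord, fun s hs => Or.inr ?_⟩
      exact Set.mem_biUnion ht ⟨s, by simpa using hs, rfl⟩
    | one =>
      refine ⟨[], rfl, fun s hs => Or.inl ?_⟩
      rw [List.suffix_nil.1 hs]; rfl
    | mul a b ha hb iha ihb =>
      obtain ⟨l₁, rfl, h1⟩ := iha
      obtain ⟨l₂, rfl, h2⟩ := ihb
      refine ⟨l₁ ++ l₂, mul_mk.symm, fun s hs => ?_⟩
      rcases suffix_append_cases hs with hs | ⟨s₁, hs₁, rfl⟩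
      · exact h2 s hs
      · rw [← mul_mk, QuotientGroup.mk_mul_of_mem _ hb]
        exact h1 _ hs₁
    | inv a ha iha =>
      obtain ⟨l, rfl, h1⟩ := iha
      refine ⟨invRev l, inv_mk.symm, ?_⟩
      rintro s ⟨p, hp⟩
      have hl : l = invRev s ++ invRev p := by
        rw [← invRev_append, hp, invRev_invRev]
      have : mk s = mk (invRev p) * (mk l)⁻¹ := by
        rw [hl, ← mul_mk, ← inv_mk (L := s)]; group
      rw [this, QuotientGroup.mk_mul_of_mem _ (H.inv_mem ha)]
      exact h1 _ ⟨_, hl.symm⟩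
  intro h hh
  obtain ⟨l, rfl, hl⟩ := h1 h hh
  rw [toWord_mk]
  have hred := FreeGroup.reduce.red (L := l)
  generalize FreeGroup.reduce l = l' at hred
  induction hred with
  | refl => exact hl
  | tail _ hstep ih =>
    cases hstep with
    | @not L₁ L₂ x b =>
      intro s hs
      rcases suffix_append_cases hs with hs | ⟨s₁, hs₁, rfl⟩
      · exact ih _ (hs.trans ⟨L₁ ++ [(x, b), (x, !b)], by simp⟩)
      · have : mk (s₁ ++ L₂) = mk (s₁ ++ (x, b) :: (x, !b) :: L₂) :=
          (Quot.sound Red.Step.not).symm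
        rw [this]
        obtain ⟨p, rfl⟩ := hs₁
        exact ih _ ⟨p, by simp⟩

/-- The product of two reduced words is obtained by cancelling a final segment of the first against
an initial segment of the second. -/
lemma exists_cancel (l₁ l₂ : List (β × Bool)) (h₁ : IsReduced l₁) (h₂ : IsReduced l₂) :
    ∃ a c b, l₁ = a ++ invRev c ∧ l₂ = c ++ b ∧ (mk l₁ * mk l₂).toWord = a ++ b := by
  induction l₂ generalizing l₁ with
  | nil =>
    refine ⟨l₁, [], [], by simp, rfl, ?_⟩
    rw [mul_mk, toWord_mk, List.append_nil, h₁.reduce_eq]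
  | cons z l ih =>
    by_cases hz : ∃ l', l₁ = l' ++ [(z.1, !z.2)]
    · obtain ⟨l', rfl⟩ := hz
      obtain ⟨a, c, b, rfl, rfl, e⟩ := ih l' (h₁.infix ⟨[], _, rfl⟩)
        (h₂.infix ⟨[z], [], by simp⟩)
      refine ⟨a, z :: c, b, by simp [invRev], by simp, ?_⟩
      rw [← e, ← mul_mk]
      congr 1
      have : mk [(z.1, !z.2)] * mk [z] = 1 := by
        rw [show ([(z.1, !z.2)] : List (β × Bool)) = invRev [z] from rfl, ← inv_mk,
          inv_mul_cancel]
      rw [mk_cons z, mul_assoc, ← mul_assoc (mk [(z.1, !z.2)]), this, one_mul]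
    · refine ⟨l₁, [], z :: l, by simp, rfl, ?_⟩
      rw [mul_mk, toWord_mk, IsReduced.reduce_eq]
      refine List.isChain_append.2 ⟨h₁, h₂, ?_⟩
      rintro x hx y hy hxy
      simp only [List.head?_cons, Option.mem_def, Option.some.injEq] at hy
      subst hy
      by_contra hne
      apply hz
      obtain ⟨l', rfl⟩ : ∃ l', l₁ = l' ++ [x] := by
        obtain ⟨l', h⟩ := List.mem_getLast?_eq_getLast hx
        exact ⟨l₁.dropLast, by
          conv_lhs => rw [← List.dropLast_append_getLast l']
          rw [h]⟩
      refine ⟨l', ?_⟩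
      obtain ⟨x1, x2⟩ := x
      obtain ⟨z1, z2⟩ := z
      simp only at hxy hne
      subst hxy
      cases x2 <;> cases z2 <;> simp_all

end core

section positive
variable {β : Type*}

/-- The element of the free group given by a positive word. -/
def pr (l : List β) : FreeGroup β := mk (l.map fun b => (b, true))

@[simp] lemma pr_nil : pr ([] : List β) = 1 := rfl

lemma pr_append (l₁ l₂ : List β) : pr (l₁ ++ l₂) = pr l₁ * pr l₂ := by
  simp [pr, mul_mk]

lemma isReduced_pos (l : List β) : IsReduced (l.map fun b => (b, true)) := by
  induction l with
  | nil => simp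
  | cons a l ih =>
    cases l with
    | nil => simp
    | cons b l => simpa [isReduced_cons_cons] using ih

lemma pr_flatten (M : ℕ) (W : List β) : pr (List.replicate M W).flatten = pr W ^ M := by
  induction M with
  | zero => simp
  | succ M ih => rw [List.replicate_succ, List.flatten_cons, pr_append, ih, pow_succ']

variable {X : Type*} [MulAction (FreeGroup β) X]

/-- The points of `V` from which reading `l` from right to left never leaves `V`. -/
def stay (V : Set X) (l : List β) : Set X := {v | ∀ s, s <:+ l → pr s • v ∈ V}

lemma stay_subset (V : Set X) (l : List β) : stay V l ⊆ V := fun v hv => by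
  simpa using hv [] (List.nil_suffix)

lemma mem_stay_append {V : Set X} {l₁ l₂ : List β} {v : X} :
    v ∈ stay V (l₁ ++ l₂) ↔ v ∈ stay V l₂ ∧ pr l₂ • v ∈ stay V l₁ := by
  constructor
  · intro h
    refine ⟨fun s hs => h s (hs.trans (List.suffix_append _ _)), fun s hs => ?_⟩
    rw [← mul_smul, ← pr_append]
    obtain ⟨p, rfl⟩ := hs
    exact h _ ⟨p, by simp⟩
  · rintro ⟨h1, h2⟩ s hs
    rcases suffix_append_cases hs with hs | ⟨s₁, hs₁, rfl⟩
    · exact h1 s hs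
    · rw [pr_append, mul_smul]
      exact h2 _ hs₁

/-- If a power of the positive word `W` is conjugate into `H`, then the reduced words of
`g⁻¹ W ^ M g`, for large `M`, contain a copy of `W`, and the coset at which it is read stays in `V`. -/
lemma stay_nonempty [DecidableEq β] {H : Subgroup (FreeGroup β)} {V : Set (FreeGroup β ⧸ H)}
    (hV : ∀ h ∈ H, ∀ s, s <:+ h.toWord → ((mk s : FreeGroup β) : FreeGroup β ⧸ H) ∈ V)
    {W : List β} {m : ℕ} (hm : 0 < m) {g : FreeGroup β} (hg : g⁻¹ * pr W ^ m * g ∈ H) :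
    (stay V W).Nonempty := by
  rcases W.eq_nil_or_concat with rfl | hW
  · refine ⟨((1 : FreeGroup β) : FreeGroup β ⧸ H), fun s hs => ?_⟩
    rw [List.suffix_nil.1 hs]
    exact hV 1 H.one_mem [] (List.nil_suffix)
  have hW : 1 ≤ W.length := by
    obtain ⟨L, b, rfl⟩ := hW
    simp
  set n := g.toWord.length with hn
  -- At most `n` letters cancel on either side, so in `W ^ (m * (2 * n + 1))` a copy of `W` preceded
  -- and followed by at least `n` further copies survives.
  obtain ⟨q, hq⟩ : ∃ q, m * (2 * n + 1) = n + (1 + (n + q)) := by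
    obtain ⟨m, rfl⟩ := Nat.exists_eq_add_of_lt hm
    exact ⟨m * (2 * n + 1), by ring⟩
  have hpow : g⁻¹ * (pr W ^ (m * (2 * n + 1)) * g) ∈ H := by
    have : g⁻¹ * (pr W ^ (m * (2 * n + 1)) * g) = (g⁻¹ * pr W ^ m * g) ^ (2 * n + 1) := by
      have := conj_pow (i := 2 * n + 1) (a := g⁻¹) (b := pr W ^ m)
      rw [inv_inv] at this
      rw [this, pow_mul, mul_assoc]
    rw [this]
    exact H.pow_mem hg _
  let P : ℕ → List (β × Bool) := fun k => (List.replicate k W).flatten.map fun b => (b, true)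
  have hP : ∀ k, mk (P k) = pr W ^ k := fun k => pr_flatten k W
  have hPadd : ∀ j k, P (j + k) = P j ++ P k := fun j k => by
    simp only [P, ← List.replicate_append_replicate, List.flatten_append, List.map_append]
  have hP1 : P 1 = W.map fun b => (b, true) := by simp [P]
  have hPlen : ∀ k, k ≤ (P k).length := fun k => by
    simp only [P, List.length_map, List.length_flatten, List.map_replicate, List.sum_replicate,
      smul_eq_mul]
    exact Nat.le_mul_of_pos_right _ hW
  obtain ⟨a, c, b, e1, e2, e3⟩ := exists_cancel (P (m * (2 * n + 1))) g.toWord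
    (isReduced_pos _) isReduced_toWord
  rw [hP, mk_toWord] at e3
  obtain ⟨a', c', b', e1', e2', e3'⟩ := exists_cancel g⁻¹.toWord (a ++ b) isReduced_toWord
    (e3 ▸ isReduced_toWord)
  rw [mk_toWord, ← e3, mk_toWord] at e3'
  have hc : (invRev c).length ≤ n := by
    rw [invRev_length, hn, e2]; simp
  have hc' : c'.length ≤ n := by
    have := congrArg List.length e1'
    rw [toWord_inv, invRev_length, List.length_append, invRev_length] at this
    omega
  rw [hq, hPadd, hPadd, ← List.append_assoc] at e1
  obtain ⟨r, hr⟩ : P n ++ P 1 <+: a := by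
    refine List.prefix_of_prefix_length_le (l₃ := P n ++ P 1 ++ P (n + q)) ⟨_, rfl⟩
      ⟨_, e1.symm⟩ ?_
    have := congrArg List.length e1
    have h2 := hPlen (n + q)
    simp only [List.length_append] at this ⊢
    omega
  obtain ⟨r', hr'⟩ : c' <+: P n := by
    refine List.prefix_of_prefix_length_le (l₃ := a ++ b) ⟨b', e2'.symm⟩
      ⟨P 1 ++ r ++ b, by rw [← hr]; simp⟩ (hc'.trans (hPlen n))
  have hb' : b' = r' ++ (P 1 ++ (r ++ b)) := by
    apply List.append_cancel_left (as := c')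
    rw [← e2', ← hr, ← hr']
    simp
  refine ⟨((mk (r ++ b) : FreeGroup β) : FreeGroup β ⧸ H), ?_⟩
  rintro s ⟨p, rfl⟩
  have := hV _ hpow ((s.map fun b => (b, true)) ++ (r ++ b)) (by
    rw [e3', hb', hP1]
    exact ⟨a' ++ r' ++ p.map fun b => (b, true), by simp⟩)
  rw [← mul_mk] at this
  exact this

end positive

/-! ### A basis in which `H` and `K` have bounded exponents -/

lemma fg_map {G G' : Type*} [Group G] [Group G'] {H : Subgroup G} (hH : H.FG) (f : G →* G') :
    (H.map f).FG := by
  rw [Subgroup.fg_iff_submonoid_fg] at hH ⊢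
  exact hH.map f

section basis
variable {β : Type*}

/-- The positive words `y i` form a basis of the free group. -/
def IsPosBasis (y : β → List β) : Prop :=
  Function.Bijective (FreeGroup.lift fun i => pr (y i) : FreeGroup β →* FreeGroup β)

lemma isPosBasis_singleton : IsPosBasis fun i : β => [i] := by
  have : (FreeGroup.lift fun i => pr [i] : FreeGroup β →* FreeGroup β) = MonoidHom.id _ := by
    ext i; rfl
  rw [IsPosBasis, this]
  exact Function.bijective_id

variable [DecidableEq β]

lemma bijective_transvection {j : β} (u v : FreeGroup β →* FreeGroup β)
    (hu : ∀ k, k ≠ j → u (of k) = of k) (hv : ∀ k, k ≠ j → v (of k) = of k)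
    (huv : u (v (of j)) = of j) (hvu : v (u (of j)) = of j) : Function.Bijective u := by
  have h1 : u.comp v = MonoidHom.id _ := by
    ext k
    by_cases hk : k = j
    · subst hk; simpa using huv
    · simp [hv k hk, hu k hk]
  have h2 : v.comp u = MonoidHom.id _ := by
    ext k
    by_cases hk : k = j
    · subst hk; simpa using hvu
    · simp [hv k hk, hu k hk]
  exact Function.bijective_iff_has_inverse.2
    ⟨v, fun g => DFunLike.congr_fun h2 g, fun g => DFunLike.congr_fun h1 g⟩

lemma IsPosBasis.update_right {y : β → List β} (hy : IsPosBasis y) {i j : β} (hij : i ≠ j) :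
    IsPosBasis (Function.update y j (y j ++ y i)) := by
  let u : FreeGroup β →* FreeGroup β := FreeGroup.lift (Function.update of j (of j * of i))
  let v : FreeGroup β →* FreeGroup β := FreeGroup.lift (Function.update of j (of j * (of i)⁻¹))
  have hu : Function.Bijective u := by
    refine bijective_transvection (j := j) u v (fun k hk => ?_) (fun k hk => ?_) ?_ ?_ <;>
      simp_all [u, v]
  have : (FreeGroup.lift fun k => pr (Function.update y j (y j ++ y i) k)) =
      (FreeGroup.lift fun k => pr (y k)).comp u := by
    ext k
    by_cases hk : k = j
    · subst hk; simp [u, pr_append]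
    · simp [u, hk]
  rw [IsPosBasis, this]
  exact hy.comp hu

lemma IsPosBasis.update_left {y : β → List β} (hy : IsPosBasis y) {i j : β} (hij : i ≠ j) :
    IsPosBasis (Function.update y i (y j ++ y i)) := by
  let u : FreeGroup β →* FreeGroup β := FreeGroup.lift (Function.update of i (of j * of i))
  let v : FreeGroup β →* FreeGroup β := FreeGroup.lift (Function.update of i ((of j)⁻¹ * of i))
  have hji := hij.symm
  have hu : Function.Bijective u := by
    refine bijective_transvection (j := i) u v (fun k hk => ?_) (fun k hk => ?_) ?_ ?_ <;>
      simp_all [u, v]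
  have : (FreeGroup.lift fun k => pr (Function.update y i (y j ++ y i) k)) =
      (FreeGroup.lift fun k => pr (y k)).comp u := by
    ext k
    by_cases hk : k = i
    · subst hk; simp [u, pr_append]
    · simp [u, hk]
  rw [IsPosBasis, this]
  exact hy.comp hu

variable {X : Type*} [MulAction (FreeGroup β) X]

/-- If the free group has rank at least three and acts without nonempty finite invariant sets, then for
every finite `V` there is a basis of positive words none of which can be read within `V`. -/
lemma exists_basis_stay_empty [Fintype β] (hβ : 3 ≤ Fintype.card β)
    (hX : ∀ W : Set X, W.Finite → (∀ g : FreeGroup β, ∀ w ∈ W, g • w ∈ W) → W = ∅)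
    {V : Set X} (hV : V.Finite) :
    ∃ y : β → List β, IsPosBasis y ∧ ∀ i, stay V (y i) = ∅ := by
  obtain ⟨y, hy, hmin⟩ := (measure fun y : β → List β =>
    ∑ i, (stay V (y i)).ncard).wf.has_min {y | IsPosBasis y} ⟨_, isPosBasis_singleton⟩
  replace hmin : ∀ z, IsPosBasis z →
      ∑ i, (stay V (y i)).ncard ≤ ∑ i, (stay V (z i)).ncard :=
    fun z hz => not_lt.1 (hmin z hz)
  have hfin : ∀ l : List β, (stay V l).Finite := fun l => hV.subset (stay_subset V l)
  have hcard : ∀ (k : β) (w : List β), IsPosBasis (Function.update y k w) →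
      (stay V (y k)).ncard ≤ (stay V w).ncard := by
    intro k w hw
    have := hmin _ hw
    rw [← Finset.add_sum_erase _ _ (Finset.mem_univ k),
      ← Finset.add_sum_erase _ _ (Finset.mem_univ k)] at this
    rw [Function.update_self, Finset.sum_congr rfl (g := fun i => (stay V (y i)).ncard)
      (s₁ := Finset.univ.erase k) (f := fun i => (stay V (Function.update y k w i)).ncard)] at this
    · omega
    · intro i hi
      rw [Function.update_of_ne (Finset.ne_of_mem_erase hi)]
  have hinj : ∀ i, Function.Injective fun v : X => pr (y i) • v := fun i =>
    MulAction.injective (pr (y i))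
  -- Minimality against replacing `y i` by `y j ++ y i` gives the inclusion `⊆`; minimality against
  -- replacing `y j` by `y j ++ y i` gives the comparison of cardinalities.
  have key : ∀ i j, i ≠ j → (fun v => pr (y i) • v) '' stay V (y i) = stay V (y j) := by
    intro i j hij
    have h1 := hcard j _ (hy.update_right hij)
    have h2 := hcard i _ (hy.update_left hij)
    have e : stay V (y j ++ y i) = stay V (y i) :=
      Set.eq_of_subset_of_ncard_le (fun v hv => (mem_stay_append.1 hv).1) h2 (hfin _)
    refine Set.eq_of_subset_of_ncard_le ?_ ?_ (hfin _)
    · rintro _ ⟨v, hv, rfl⟩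
      rw [← e] at hv
      exact (mem_stay_append.1 hv).2
    · rw [Set.ncard_image_of_injective _ (hinj i), ← e]
      exact h1
  have hthird : ∀ i j : β, ∃ k, k ≠ i ∧ k ≠ j := by
    intro i j
    have : ({i, j} : Finset β).card < Fintype.card β :=
      lt_of_le_of_lt Finset.card_le_two (by omega)
    obtain ⟨k, hk⟩ := Finset.exists_mem_notMem_of_card_lt_card (s := {i, j})
      (t := Finset.univ) this
    exact ⟨k, by simpa using hk.2⟩
  have hall : ∀ i j, stay V (y i) = stay V (y j) := by
    intro i j
    obtain ⟨k, hki, hkj⟩ := hthird i j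
    rw [← key k i hki, ← key k j hkj]
  have hinv : ∀ i j, (fun v => pr (y i) • v) '' stay V (y j) = stay V (y j) := by
    intro i j
    obtain ⟨k, hki, -⟩ := hthird i i
    rw [hall j i, key i k hki.symm, hall k i]
  refine ⟨y, hy, fun i => hX _ (hfin _) ?_⟩
  intro g
  obtain ⟨g, rfl⟩ := hy.2 g
  induction g using FreeGroup.induction_on with
  | C1 => intro w hw; simpa using hw
  | of j =>
    intro w hw
    rw [lift_apply_of, ← hinv j i]
    exact ⟨w, hw, rfl⟩
  | inv_of j _ =>
    intro w hw
    rw [← hinv j i] at hw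
    obtain ⟨v, hv, rfl⟩ := hw
    rw [map_inv, lift_apply_of]
    simpa using hv
  | mul a b ha hb =>
    intro w hw
    rw [map_mul, mul_smul]
    exact ha _ (hb _ hw)

end basis

lemma mk_replicate {β : Type*} (a : β) (b : Bool) (k : ℕ) :
    mk (List.replicate k (a, b)) = of a ^ (sg b * (k : ℤ)) := by
  induction k with
  | zero => simp; rfl
  | succ k ih => rw [List.replicate_succ, mk_cons, letter_eq, ih, ← zpow_add]; congr 1; push_cast; ring

section bounded
variable {β : Type*} [DecidableEq β] {H : Subgroup (FreeGroup β)}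

lemma run_split (a : β) {l : List (β × Bool)} (hl : IsReduced l) :
    ∃ b k r, l = List.replicate k (a, b) ++ r ∧ run a l = sg b * (k : ℤ) := by
  induction l with
  | nil => exact ⟨true, 0, [], rfl, by simp⟩
  | cons z l ih =>
    obtain ⟨c, t⟩ := z
    by_cases hc : c = a
    · subst hc
      obtain ⟨b, k, r, rfl, e⟩ := ih (hl.infix ⟨[(c, t)], [], by simp⟩)
      rw [run_cons_self, e]
      rcases k with _ | k
      · exact ⟨t, 1, r, rfl, by simp⟩
      · have : t = b := by
          rw [List.replicate_succ, List.cons_append, isReduced_cons_cons] at hl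
          exact hl.1 rfl
        subst this
        exact ⟨t, k + 2, r, rfl, by push_cast; ring⟩
    · exact ⟨true, 0, (c, t) :: l, rfl, by simp [run_cons_ne hc]⟩

/-- If no power of the generator `a` is conjugate into `H`, a long power of `a` in a reduced word of an
element of `H` would visit some coset twice; hence exponents of `a` are bounded. -/
lemma exists_run_bound (hH : H.FG) (a : β)
    (ha : ∀ (g : FreeGroup β) (m : ℕ), 0 < m → g⁻¹ * of a ^ m * g ∉ H) :
    ∃ N : ℕ, ∀ h ∈ H, ∀ s, s <:+ h.toWord → |run a s| < N := by
  obtain ⟨V, hV, hVH⟩ := exists_core hH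
  refine ⟨V.ncard, fun h hh s hs => ?_⟩
  obtain ⟨b, k, r, rfl, e⟩ := run_split a (isReduced_toWord.infix hs.isInfix)
  have habs : |run a (List.replicate k (a, b) ++ r)| = k := by
    rw [e, abs_mul]; cases b <;> simp [sg]
  rw [habs]
  -- The cosets visited along a run of length `k` are pairwise distinct.
  let f : Fin (k + 1) → FreeGroup β ⧸ H := fun i =>
    ((mk (List.replicate i (a, b) ++ r) : FreeGroup β) : FreeGroup β ⧸ H)
  have hf : Set.range f ⊆ V := by
    rintro _ ⟨i, rfl⟩
    refine hVH h hh _ (List.IsSuffix.trans ⟨List.replicate (k - i) (a, b), ?_⟩ hs)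
    rw [← List.append_assoc, List.replicate_append_replicate]
    congr 2; omega
  have hinj : Function.Injective f := by
    intro i j hij
    by_contra hne
    wlog hlt : i < j generalizing i j
    · exact this hij.symm (Ne.symm hne) (lt_of_le_of_ne (not_lt.1 hlt) (Ne.symm hne))
    obtain ⟨d, hd⟩ := Nat.exists_eq_add_of_lt (Fin.lt_def.1 hlt)
    have h1 := QuotientGroup.eq.1 hij
    rw [← mul_mk, ← mul_mk, mk_replicate, mk_replicate] at h1
    have h2 : (of a ^ (sg b * ((i : ℕ) : ℤ)) * mk r)⁻¹ * (of a ^ (sg b * ((j : ℕ) : ℤ)) * mk r) =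
        (mk r)⁻¹ * of a ^ (sg b * ((d + 1 : ℕ) : ℤ)) * mk r := by
      rw [hd]; push_cast; group
    rw [h2] at h1
    cases b
    · refine ha (mk r) (d + 1) (Nat.succ_pos d) ?_
      have h3 := H.inv_mem h1
      have h4 : ((mk r)⁻¹ * of a ^ (sg false * ((d + 1 : ℕ) : ℤ)) * mk r)⁻¹
        = (mk r)⁻¹ * of a ^ (d + 1) * mk r := by
        rw [← zpow_natCast]; simp only [sg]; push_cast; group
      rwa [h4] at h3
    · refine ha (mk r) (d + 1) (Nat.succ_pos d) ?_
      rw [← zpow_natCast]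
      simpa [sg] using h1
  have h1 := Set.ncard_le_ncard hf hV
  rw [Set.ncard_range_of_injective hinj] at h1
  simp at h1
  exact_mod_cast h1

end bounded

/-- After an automorphism of the free group, the exponents of all letters in reduced words of elements
of `H` and `K` are bounded. -/
theorem exists_good_basis {β : Type*} [DecidableEq β] [Fintype β] (hβ : 3 ≤ Fintype.card β)
    {H K : Subgroup (FreeGroup β)} (hH : H.FG) (hK : K.FG) (hHi : H.index = 0)
    (hKi : K.index = 0) :
    ∃ φ : FreeGroup β ≃* FreeGroup β, ∃ N : ℕ, ∀ a : β,
      (∀ h ∈ H, ∀ s, s <:+ (φ h).toWord → |run a s| < N) ∧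
      (∀ h ∈ K, ∀ s, s <:+ (φ h).toWord → |run a s| < N) := by
  obtain ⟨V, hV, hVH⟩ := exists_core hH
  obtain ⟨U, hU, hUK⟩ := exists_core hK
  have trans : ∀ (H : Subgroup (FreeGroup β)) (w v : FreeGroup β ⧸ H), ∃ g : FreeGroup β,
    g • w = v := fun H w v => MulAction.exists_smul_eq _ w v
  obtain ⟨y, hy, hstay⟩ := exists_basis_stay_empty hβ
    (X := (FreeGroup β ⧸ H) ⊕ (FreeGroup β ⧸ K)) (V := Sum.inl '' V ∪ Sum.inr '' U)
    (by
      intro W hW hinv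
      by_contra hne
      obtain ⟨w | w, hw⟩ := Set.nonempty_iff_ne_empty.2 hne
      · have : (Set.univ : Set (FreeGroup β ⧸ H)).Finite := by
          refine (hW.preimage Sum.inl_injective.injOn).subset fun v _ => ?_
          obtain ⟨g, rfl⟩ := trans H w v
          exact hinv g _ hw
        have := Set.finite_univ_iff.1 this
        exact Subgroup.index_ne_zero_of_finite hHi
      · have : (Set.univ : Set (FreeGroup β ⧸ K)).Finite := by
          refine (hW.preimage Sum.inr_injective.injOn).subset fun v _ => ?_
          obtain ⟨g, rfl⟩ := trans K w v
          exact hinv g _ hw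
        have := Set.finite_univ_iff.1 this
        exact Subgroup.index_ne_zero_of_finite hKi)
    ((hV.image _).union (hU.image _))
  let φ : FreeGroup β ≃* FreeGroup β := MulEquiv.ofBijective _ hy
  have hφ : ∀ i, φ (of i) = pr (y i) := fun i =>
    lift_apply_of (f := fun i => pr (y i))
  have hloop : ∀ (J : Subgroup (FreeGroup β)) (T : Set (FreeGroup β ⧸ J)),
      (∀ h ∈ J, ∀ s, s <:+ h.toWord → ((mk s : FreeGroup β) : FreeGroup β ⧸ J) ∈ T) →
      (∀ i, stay T (y i) = ∅) → J.FG →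
      ∀ a, ∃ N : ℕ, ∀ h ∈ J, ∀ s, s <:+ (φ.symm h).toWord → |run a s| < N := by
    intro J T hT hst hJ a
    obtain ⟨N, hN⟩ := exists_run_bound (H := J.map φ.symm.toMonoidHom) (fg_map hJ _) a (by
      rintro g m hm ⟨h, hh, e⟩
      have : (φ g)⁻¹ * pr (y a) ^ m * φ g ∈ J := by
        rw [← hφ, ← map_pow, ← map_inv, ← map_mul, ← map_mul, ← e]
        simpa using hh
      exact (stay_nonempty hT hm this).ne_empty (hst a))
    exact ⟨N, fun h hh => hN _ ⟨h, hh, rfl⟩⟩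
  have hH' := hloop H V hVH (fun i => Set.eq_empty_of_forall_notMem fun v hv => by
    have : (Sum.inl v : (FreeGroup β ⧸ H) ⊕ (FreeGroup β ⧸ K)) ∈
        stay (Sum.inl '' V ∪ Sum.inr '' U) (y i) := fun s hs => Or.inl ⟨_, hv s hs, rfl⟩
    rw [hstay] at this
    exact this) hH
  have hK' := hloop K U hUK (fun i => Set.eq_empty_of_forall_notMem fun v hv => by
    have : (Sum.inr v : (FreeGroup β ⧸ H) ⊕ (FreeGroup β ⧸ K)) ∈
        stay (Sum.inl '' V ∪ Sum.inr '' U) (y i) := fun s hs => Or.inr ⟨_, hv s hs, rfl⟩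
    rw [hstay] at this
    exact this) hK
  choose N₁ hN₁ using hH'
  choose N₂ hN₂ using hK'
  refine ⟨φ.symm, ∑ a, (N₁ a + N₂ a), fun a => ?_⟩
  have hle : N₁ a + N₂ a ≤ ∑ a, (N₁ a + N₂ a) :=
    Finset.single_le_sum (f := fun a => N₁ a + N₂ a) (fun _ _ => Nat.zero_le _)
      (Finset.mem_univ a)
  constructor
  · intro h hh s hs
    exact (hN₁ a h hh s hs).trans_le (by exact_mod_cast le_trans (Nat.le_add_right _ _) hle)
  · intro h hh s hs
    exact (hN₂ a h hh s hs).trans_le (by exact_mod_cast le_trans (Nat.le_add_left _ _) hle)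

/-- A power `y ^ n` in the image of `H` is the image of the same power `y ^ n` in `H`, but exponents of
`y` in `H` are bounded. -/
lemma index_map_eq_zero {α : Type*} [DecidableEq α] {x y : α} (hxy : x ≠ y) {L : ℤ} (hL : 0 < L)
    {H : Subgroup (FreeGroup (Option α))}
    (hH : ∀ h ∈ H, sig x y L (epsHom x y L h) = h)
    (hb : ∀ h ∈ H, ∀ s, s <:+ h.toWord → |run (some y) s| < L) :
    (H.map (epsHom x y L)).index = 0 := by
  by_contra h0
  obtain ⟨n, hn, -, h, hh, e⟩ := Subgroup.exists_pow_mem_of_index_ne_zero h0 (of y)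
  have h1 := hH h hh
  rw [e, ← zpow_natCast, ← mul_one (of y ^ (n : ℤ)), sig_zpow_mul_ne hxy.symm, sig_one,
    mul_one] at h1
  have h2 := hb _ (H.pow_mem hh L.toNat) _ List.suffix_rfl
  rw [← h1, ← zpow_natCast, ← zpow_mul] at h2
  have h3 := ix_zpow (some y) ((n : ℤ) * (L.toNat : ℤ))
  rw [ix] at h3
  rw [h3, Int.toNat_of_nonneg hL.le, abs_of_nonneg (by positivity)] at h2
  nlinarith

/-! ### Assembly -/

/-- The rank reduction for subgroups `A`, `B` of infinite index in a free group with basis indexed by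
`Option α`. -/
theorem exists_rank_reduction {Λ α : Type*} [Group Λ] [Fintype α] [DecidableEq α]
    (e : Λ ≃* FreeGroup (Option α)) {x y : α} (hxy : x ≠ y) {A B : Subgroup Λ} (hA : A.FG)
    (hB : B.FG) (hAi : A.index = 0) (hBi : B.index = 0) {S : Set Λ} (hS : IsDCRep A B S) :
    ∃ ε₁ : Λ →* FreeGroup α, Function.Surjective ε₁ ∧ Set.InjOn ε₁ A ∧ Set.InjOn ε₁ B ∧
      IsDCRep (A.map ε₁) (B.map ε₁) (ε₁ '' S) ∧ Set.InjOn ε₁ S ∧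
      (∀ s ∈ S, (A ⊓ conjSubgroup s B).map ε₁ = A.map ε₁ ⊓ conjSubgroup (ε₁ s) (B.map ε₁)) ∧
      (A.map ε₁).index = 0 ∧ (B.map ε₁).index = 0 := by
  have hcard : 3 ≤ Fintype.card (Option α) := by
    have : 1 < Fintype.card α := Fintype.one_lt_card_iff.2 ⟨x, y, hxy⟩
    rw [Fintype.card_option]; omega
  obtain ⟨φ, N, hN⟩ := exists_good_basis hcard (fg_map hA e.toMonoidHom)
    (fg_map hB e.toMonoidHom) (by rw [← hAi]; exact Subgroup.index_map_equiv A e)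
    (by rw [← hBi]; exact Subgroup.index_map_equiv B e)
  set ψ : Λ ≃* FreeGroup (Option α) := e.trans φ with hψ
  set L : ℤ := N + 1 with hLdef
  have hL : 0 < L := by positivity
  have hA' : ∀ h ∈ A.map ψ.toMonoidHom, ∀ (a : Option α) s, s <:+ h.toWord → |run a s| < L := by
    rintro _ ⟨h, hh, rfl⟩ a s hs
    exact ((hN a).1 _ ⟨h, hh, rfl⟩ s hs).trans (by omega)
  have hB' : ∀ h ∈ B.map ψ.toMonoidHom, ∀ (a : Option α) s, s <:+ h.toWord → |run a s| < L := by
    rintro _ ⟨h, hh, rfl⟩ a s hs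
    exact ((hN a).2 _ ⟨h, hh, rfl⟩ s hs).trans (by omega)
  have fixA : ∀ h ∈ A.map ψ.toMonoidHom, sig x y L (epsHom x y L h) = h := fun h hh =>
    sig_epsHom hxy hL h fun s hs => ⟨hA' h hh _ s hs, hA' h hh _ s hs⟩
  have fixB : ∀ h ∈ B.map ψ.toMonoidHom, sig x y L (epsHom x y L h) = h := fun h hh =>
    sig_epsHom hxy hL h fun s hs => ⟨hB' h hh _ s hs, hB' h hh _ s hs⟩
  let ε₁ : Λ →* FreeGroup α := (epsHom x y L).comp ψ.toMonoidHom
  let σ₁ : FreeGroup α → Λ := fun q => ψ.symm (sig x y L q)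
  have hq := quasiSection_sig (x := x) (y := y) hL
  have hσ : QuasiSection ε₁ σ₁ := by
    refine ⟨fun q => by simp [ε₁, σ₁, hq.sec], fun u => ?_, fun u => ?_⟩
    · refine ((hq.left u).image ψ.symm).subset ?_
      rintro _ ⟨r, rfl⟩
      exact ⟨_, ⟨r, rfl⟩, by simp [σ₁]⟩
    · refine ((hq.right u).image ψ.symm).subset ?_
      rintro _ ⟨r, rfl⟩
      exact ⟨_, ⟨r, rfl⟩, by simp [σ₁]⟩
  have hAσ : ∀ h ∈ A, σ₁ (ε₁ h) = h := fun h hh => by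
    have := fixA (ψ h) ⟨h, hh, rfl⟩
    simp [σ₁, ε₁, this]
  have hBσ : ∀ h ∈ B, σ₁ (ε₁ h) = h := fun h hh => by
    have := fixB (ψ h) ⟨h, hh, rfl⟩
    simp [σ₁, ε₁, this]
  have : IsMulTorsionFree Λ := ψ.injective.isMulTorsionFree ψ.toMonoidHom
  have hker : ∀ z c : Λ, ε₁ z = 1 → z * c = c * z → ε₁ c ≠ 1 → z = 1 := by
    intro z c hz hc h1
    have := eq_one_of_commute (epsHom x y L) (ψ z) (ψ c) hz
      (by rw [← map_mul, hc, map_mul]) h1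
    simpa using this
  obtain ⟨c1, c2, c3⟩ := conclusions hσ hker hAσ hBσ hS
  refine ⟨ε₁, fun q => ⟨σ₁ q, hσ.sec q⟩, fun a ha b hb hab => ?_, fun a ha b hb hab => ?_,
    c1, c2, c3, ?_, ?_⟩
  · rw [← hAσ a ha, hab, hAσ b hb]
  · rw [← hBσ a ha, hab, hBσ b hb]
  · rw [← Subgroup.map_map]
    exact index_map_eq_zero hxy hL fixA fun h hh s hs => hA' h hh _ s hs
  · rw [← Subgroup.map_map]
    exact index_map_eq_zero hxy hL fixB fun h hh s hs => hB' h hh _ s hs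

lemma fg_subgroupOf {G : Type*} [Group G] {H L : Subgroup G} (hH : H.FG) (hHL : H ≤ L) :
    (H.subgroupOf L).FG := by
  rw [Subgroup.fg_iff_submonoid_fg] at hH ⊢
  refine Submonoid.FG.map_injective L.subtype L.subtype_injective ?_
  have := congrArg Subgroup.toSubmonoid (Subgroup.map_subgroupOf_eq_of_le hHL)
  rw [← this] at hH
  exact hH

lemma inf_conjSubgroup_subgroupOf {G : Type*} [Group G] {H K L : Subgroup G} (hKL : K ≤ L)
    (s : L) : (H ⊓ conjSubgroup (s : G) K).subgroupOf L =
      H.subgroupOf L ⊓ conjSubgroup s (K.subgroupOf L) := by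
  ext g
  simp only [Subgroup.mem_subgroupOf, Subgroup.mem_inf, conjSubgroup, Subgroup.mem_map]
  refine and_congr_right fun _ => ⟨?_, ?_⟩
  · rintro ⟨k, hk, e⟩
    exact ⟨⟨k, hKL hk⟩, hk, Subtype.ext e⟩
  · rintro ⟨k, hk, rfl⟩
    exact ⟨k, hk, rfl⟩

lemma isDCRep_subgroupOf {G : Type*} [Group G] {H K L : Subgroup G} {S : Set G} (hHL : H ≤ L)
    (hKL : K ≤ L) (hSL : S ⊆ L) (hS : IsDCRep H K S) :
    IsDCRep (H.subgroupOf L) (K.subgroupOf L) {x : L | (x : G) ∈ S} := by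
  obtain ⟨h1, h2, h3⟩ := hS
  refine ⟨fun s hs => ?_, fun s hs s' hs' hne => ?_, fun g hg => ?_⟩
  · obtain ⟨h, hh, k, hk, hk1, e⟩ := meets_iff.1 (h1 s hs)
    exact meets_iff.2 ⟨⟨h, hHL hh⟩, hh, ⟨k, hKL hk⟩, hk, fun h0 => hk1 (congrArg Subtype.val h0),
      Subtype.ext e⟩
  · rintro ⟨h, hh, k, hk, e⟩
    exact h2 s hs s' hs' (fun h0 => hne (Subtype.ext h0)) ⟨h, hh, k, hk, congrArg Subtype.val e⟩
  · obtain ⟨h, hh, k, hk, hk1, e⟩ := meets_iff.1 hg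
    obtain ⟨s, hs, a, ha, b, hb, e'⟩ := h3 g (meets_iff.2 ⟨h, hh, k, hk,
      fun h0 => hk1 (Subtype.ext h0), congrArg Subtype.val e⟩)
    exact ⟨⟨s, hSL hs⟩, hs, ⟨a, hHL ha⟩, ha, ⟨b, hKL hb⟩, hb, Subtype.ext e'⟩

end RankRed


theorem rank_reduction_step
    (m : ℕ) (hm : 2 ≤ m)
    (H K : Subgroup (FreeGroup (Fin m))) (hH : H.FG) (hK : K.FG)
    (S : Set (FreeGroup (Fin m))) (hS : IsDCRep H K S)
    (L : Subgroup (FreeGroup (Fin m)))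
    (hL : L = Subgroup.closure ((H : Set (FreeGroup (Fin m))) ∪ (K : Set (FreeGroup (Fin m))) ∪ S))
    (hHL : (H.subgroupOf L).index = 0)
    (hKL : (K.subgroupOf L).index = 0)
    (n : ℕ) (hn : 2 < n) (e : L ≃* FreeGroup (Fin n)) :
    ∃ ε₁ : L →* FreeGroup (Fin (n - 1)),
      Function.Surjective ε₁ ∧
      Set.InjOn ε₁ (H.subgroupOf L : Set L) ∧
      Set.InjOn ε₁ (K.subgroupOf L : Set L) ∧
      IsDCRep ((H.subgroupOf L).map ε₁) ((K.subgroupOf L).map ε₁)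
        (ε₁ '' {x : L | (x : FreeGroup (Fin m)) ∈ S}) ∧
      Set.InjOn ε₁ {x : L | (x : FreeGroup (Fin m)) ∈ S} ∧
      (∀ s : L, (s : FreeGroup (Fin m)) ∈ S →
        ((H ⊓ conjSubgroup (s : FreeGroup (Fin m)) K).subgroupOf L).map ε₁
          = (H.subgroupOf L).map ε₁ ⊓ conjSubgroup (ε₁ s) ((K.subgroupOf L).map ε₁)) ∧
      ((H.subgroupOf L).map ε₁).index = 0 ∧
      ((K.subgroupOf L).map ε₁).index = 0 ∧
      Subgroup.closure (((H.subgroupOf L).map ε₁ : Set (FreeGroup (Fin (n - 1)))) ∪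
          ((K.subgroupOf L).map ε₁ : Set (FreeGroup (Fin (n - 1)))) ∪
          (ε₁ '' {x : L | (x : FreeGroup (Fin m)) ∈ S})) = ⊤ := by
  have hsub : (H : Set (FreeGroup (Fin m))) ∪ K ∪ S ⊆ L := by
    rw [hL]; exact Subgroup.subset_closure
  have hH_le : H ≤ L := fun h hh => hsub (Or.inl (Or.inl hh))
  have hK_le : K ≤ L := fun h hh => hsub (Or.inl (Or.inr hh))
  have hS_le : S ⊆ L := fun h hh => hsub (Or.inr hh)
  obtain ⟨k, rfl⟩ : ∃ k, n = k + 1 := ⟨n - 1, by omega⟩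
  let e' : L ≃* FreeGroup (Option (Fin k)) :=
    e.trans (FreeGroup.freeGroupCongr (finSuccEquiv k))
  obtain ⟨ε₁, h1, h2, h3, h4, h5, h6, h7, h8⟩ := RankRed.exists_rank_reduction e'
    (x := (⟨0, by omega⟩ : Fin k)) (y := ⟨1, by omega⟩) (by simp)
    (RankRed.fg_subgroupOf hH hH_le) (RankRed.fg_subgroupOf hK hK_le) hHL hKL
    (RankRed.isDCRep_subgroupOf hH_le hK_le hS_le hS)
  refine ⟨ε₁, h1, h2, h3, h4, h5, fun s hs => ?_, h7, h8, ?_⟩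
  · rw [RankRed.inf_conjSubgroup_subgroupOf hK_le]
    exact h6 s hs
  · have hclosure : Subgroup.closure (((↑) : L → FreeGroup (Fin m)) ⁻¹'
        ((H : Set (FreeGroup (Fin m))) ∪ K ∪ S)) = ⊤ := by
      subst hL
      exact Subgroup.closure_closure_coe_preimage
    have himage := MonoidHom.map_closure ε₁ (((↑) : L → FreeGroup (Fin m)) ⁻¹'
        ((H : Set (FreeGroup (Fin m))) ∪ K ∪ S))
    rw [hclosure, Subgroup.map_top_of_surjective _ h1, Set.preimage_union, Set.preimage_union,
      Set.image_union, Set.image_union] at himage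
    exact himage.symm
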